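/- arXiv:math/0310099 — 8 statements merged into one kernel-verified Lean document; each statement's English description precedes it below -/
import Mathlib

section
/- For integers p and q with 2 ≤ p < q, the groups Γ_p and Γ_q are not isomorphic. -/
/-- The relators of the group `Γ_p`: in the free group on four generators
`u = 0`, `v = 1`, `x = 2`, `y = 3`, the relators are `u^p v^(p+1)`,
`x^p y^(p+1)`, `(uv)(xy)⁻¹` and `(vu)(yx)⁻¹`. -/
def GammaRels (p : ℕ) : Set (FreeGroup (Fin 4)) :=
  { FreeGroup.of 0 ^ p * FreeGroup.of 1 ^ (p + 1),
    FreeGroup.of 2 ^ p * FreeGroup.of 3 ^ (p + 1),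
    (FreeGroup.of 0 * FreeGroup.of 1) * (FreeGroup.of 2 * FreeGroup.of 3)⁻¹,
    (FreeGroup.of 1 * FreeGroup.of 0) * (FreeGroup.of 3 * FreeGroup.of 2)⁻¹ }

/-- The group `Γ_p = ⟨u, v, x, y | u^p v^(p+1) = 1, x^p y^(p+1) = 1, uv = xy, vu = yx⟩`. -/
abbrev Gamma (p : ℕ) : Type := PresentedGroup (GammaRels p)

/-- The affine group of the complex line: `z ↦ a z + b`. -/
@[ext] structure AffC where
  a : ℂˣ
  b : ℂ

namespace AffC

instance : Mul AffC := ⟨fun f g => ⟨f.a * g.a, f.a * g.b + f.b⟩⟩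
instance : One AffC := ⟨⟨1, 0⟩⟩
noncomputable instance : Inv AffC := ⟨fun f => ⟨f.a⁻¹, -((f.a⁻¹ : ℂˣ) : ℂ) * f.b⟩⟩

theorem mul_a (f g : AffC) : (f * g).a = f.a * g.a := rfl
theorem mul_b (f g : AffC) : (f * g).b = f.a * g.b + f.b := rfl
theorem one_a : (1 : AffC).a = 1 := rfl
theorem one_b : (1 : AffC).b = 0 := rfl
theorem inv_a (f : AffC) : (f⁻¹).a = f.a⁻¹ := rfl
theorem inv_b (f : AffC) : (f⁻¹).b = -((f.a⁻¹ : ℂˣ) : ℂ) * f.b := rfl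

noncomputable instance : Group AffC :=
  Group.ofLeftAxioms
    (by
      intro f g h
      ext
      · simp [mul_a, mul_assoc]
      · simp only [mul_a, mul_b, Units.val_mul]; ring)
    (by
      intro f
      ext
      · simp [mul_a, one_a]
      · simp [mul_b, one_a, one_b])
    (by
      intro f
      ext
      · simp [mul_a, inv_a, one_a]
      · simp [mul_b, inv_b, inv_a, one_b])

/-- The linear part. -/
noncomputable def lin : AffC →* ℂˣ where
  toFun f := f.a
  map_one' := rfl
  map_mul' _ _ := rfl

theorem lin_apply (f : AffC) : lin f = f.a := rfl

theorem mk_zero_pow (a : ℂˣ) (n : ℕ) : (⟨a, 0⟩ : AffC) ^ n = ⟨a ^ n, 0⟩ := by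
  induction n with
  | zero => simp; rfl
  | succ k ih =>
    rw [pow_succ, ih, pow_succ]
    ext
    · simp [mul_a]
    · simp [mul_b]

theorem commute_iff (f g : AffC) :
    f * g = g * f ↔ ((f.a : ℂ) - 1) * g.b = ((g.a : ℂ) - 1) * f.b := by
  constructor
  · intro h
    have h2 := congrArg AffC.b h
    simp only [mul_b] at h2
    linear_combination h2
  · intro h
    ext
    · simp [mul_a, mul_comm]
    · simp only [mul_b]
      linear_combination h

/-- If `c` has nontrivial linear part, its centralizer is commutative. -/
theorem comm_of_comm (c f g : AffC) (hc : c.a ≠ 1) (hf : c * f = f * c) (hg : c * g = g * c) :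
    f * g = g * f := by
  rw [commute_iff] at *
  have hc' : (c.a : ℂ) - 1 ≠ 0 := by
    intro h
    apply hc
    ext
    simpa using sub_eq_zero.mp h
  apply mul_left_cancel₀ hc'
  linear_combination ((f.a : ℂ) - 1) * hg - ((g.a : ℂ) - 1) * hf

theorem comm_or (p : ℕ) (u v : AffC) (h : u ^ p * v ^ (p + 1) = 1) :
    u * v = v * u ∨ lin u ^ p = 1 := by
  by_cases hc : lin u ^ p = 1
  · exact Or.inr hc
  · left
    have hu : u ^ p = (v ^ (p + 1))⁻¹ := eq_inv_of_mul_eq_one_left h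
    refine comm_of_comm (u ^ p) u v ?_ ?_ ?_
    · rw [← lin_apply, map_pow]; exact hc
    · exact ((Commute.refl u).pow_left p).eq
    · rw [hu]
      exact ((Commute.refl v).pow_left (p + 1)).inv_left.eq

end AffC

theorem gen_of_commute {G : Type*} [Group G] (p : ℕ) (u v : G) (hc : u * v = v * u)
    (h : u ^ p * v ^ (p + 1) = 1) : u = (u * v) ^ (p + 1) ∧ v = ((u * v) ^ p)⁻¹ := by
  have hc' : Commute u v := hc
  constructor
  · rw [hc'.mul_pow, pow_succ' u, mul_assoc, h, mul_one]
  · rw [eq_inv_iff_mul_eq_one, hc'.mul_pow, ← mul_assoc, (hc'.symm.pow_right p).eq, mul_assoc,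
      ← pow_succ', h]

theorem gamma_rels {G : Type*} [Group G] (p : ℕ) (f : Gamma p →* G) :
    let g : Fin 4 → G := fun i => f (PresentedGroup.of i)
    g 0 ^ p * g 1 ^ (p + 1) = 1 ∧ g 2 ^ p * g 3 ^ (p + 1) = 1 ∧
      g 0 * g 1 = g 2 * g 3 ∧ g 1 * g 0 = g 3 * g 2 := by
  intro g
  have key : ∀ r ∈ GammaRels p, f (PresentedGroup.mk (GammaRels p) r) = 1 := by
    intro r hr
    rw [PresentedGroup.one_of_mem hr, map_one]
  have e : ∀ i, f (PresentedGroup.mk (GammaRels p) (FreeGroup.of i)) = g i := fun i => rfl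
  have h1 := key _ (Or.inl rfl)
  have h2 := key _ (Or.inr (Or.inl rfl))
  have h3 := key _ (Or.inr (Or.inr (Or.inl rfl)))
  have h4 := key _ (Or.inr (Or.inr (Or.inr rfl)))
  simp only [map_mul, map_pow, map_inv, e] at h1 h2 h3 h4
  exact ⟨h1, h2, mul_inv_eq_one.mp h3, mul_inv_eq_one.mp h4⟩

theorem gamma_range_le {G : Type*} [Group G] (p : ℕ) (f : Gamma p →* G) (H : Subgroup G)
    (h : ∀ i, f (PresentedGroup.of i) ∈ H) (z : Gamma p) : f z ∈ H := by
  have hz : z ∈ Subgroup.closure (Set.range (PresentedGroup.of (rels := GammaRels p))) := by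
    rw [PresentedGroup.closure_range_of]; trivial
  have hle : Subgroup.closure (Set.range (PresentedGroup.of (rels := GammaRels p)))
      ≤ H.comap f := by
    rw [Subgroup.closure_le]
    rintro _ ⟨i, rfl⟩
    exact h i
  exact hle hz

/-- A homomorphism from `Γ_p` to the affine group with nonabelian image has linear part killed
by `p (p + 1)`. -/
theorem gamma_lin (p : ℕ) (f : Gamma p →* AffC) (s t : Gamma p) (hst : f s * f t ≠ f t * f s)
    (z : Gamma p) : AffC.lin (f z) ^ (p * (p + 1)) = 1 := by
  obtain ⟨h1, h2, h3, h4⟩ := gamma_rels p f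
  set g : Fin 4 → AffC := fun i => f (PresentedGroup.of i) with hg
  have l1 := gen_of_commute p (AffC.lin (g 0)) (AffC.lin (g 1)) (mul_comm _ _)
    (by simpa only [map_mul, map_pow, map_one] using congrArg AffC.lin h1)
  have l2 := gen_of_commute p (AffC.lin (g 2)) (AffC.lin (g 3)) (mul_comm _ _)
    (by simpa only [map_mul, map_pow, map_one] using congrArg AffC.lin h2)
  have l3 : AffC.lin (g 0) * AffC.lin (g 1) = AffC.lin (g 2) * AffC.lin (g 3) := by
    rw [← map_mul, h3, map_mul]
  rw [← l3] at l2
  generalize hT : AffC.lin (g 0) * AffC.lin (g 1) = T at l1 l2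
  have hor : T ^ (p * (p + 1)) = 1 := by
    rcases AffC.comm_or p _ _ h1 with c1 | c1
    · rcases AffC.comm_or p _ _ h2 with c2 | c2
      · exfalso
        have m1 := gen_of_commute p _ _ c1 h1
        have m2 := gen_of_commute p _ _ c2 h2
        rw [← h3] at m2
        generalize g 0 * g 1 = w at m1 m2
        have hw : w ∈ Subgroup.zpowers w := Subgroup.mem_zpowers w
        have hall : ∀ i, f (PresentedGroup.of i) ∈ Subgroup.zpowers w := by
          intro i
          change g i ∈ _
          fin_cases i
          · change g 0 ∈ _
            rw [m1.1]; exact pow_mem hw _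
          · change g 1 ∈ _
            rw [m1.2]; exact inv_mem (pow_mem hw _)
          · change g 2 ∈ _
            rw [m2.1]; exact pow_mem hw _
          · change g 3 ∈ _
            rw [m2.2]; exact inv_mem (pow_mem hw _)
        obtain ⟨i, hi⟩ := gamma_range_le p f _ hall s
        obtain ⟨j, hj⟩ := gamma_range_le p f _ hall t
        apply hst
        rw [← hi, ← hj]
        exact ((Commute.refl w).zpow_zpow i j).eq
      · rw [l2.1, ← pow_mul] at c2
        rw [mul_comm]; exact c2
    · rw [l1.1, ← pow_mul] at c1
      rw [mul_comm]; exact c1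
  have hall := gamma_range_le p f (((powMonoidHom (p * (p + 1))).comp AffC.lin).ker) (by
    intro i
    rw [MonoidHom.mem_ker]
    change AffC.lin (g i) ^ (p * (p + 1)) = 1
    fin_cases i
    · change AffC.lin (g 0) ^ (p * (p + 1)) = 1
      rw [l1.1, pow_right_comm, hor, one_pow]
    · change AffC.lin (g 1) ^ (p * (p + 1)) = 1
      rw [l1.2, inv_pow, pow_right_comm, hor, one_pow, inv_one]
    · change AffC.lin (g 2) ^ (p * (p + 1)) = 1
      rw [l2.1, pow_right_comm, hor, one_pow]
    · change AffC.lin (g 3) ^ (p * (p + 1)) = 1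
      rw [l2.2, inv_pow, pow_right_comm, hor, one_pow, inv_one]) z
  exact hall

/-- `Γ_q` has a nonabelian affine representation with linear part of order `q (q + 1)`. -/
theorem gamma_exists (q : ℕ) (hq : 2 ≤ q) : ∃ (f : Gamma q →* AffC) (s t : Gamma q),
    f s * f t ≠ f t * f s ∧ ∃ z, IsPrimitiveRoot (AffC.lin (f z)) (q * (q + 1)) := by
  have hn : q * (q + 1) ≠ 0 := by positivity
  obtain ⟨ζ, hζ⟩ : ∃ ζ : ℂˣ, IsPrimitiveRoot ζ (q * (q + 1)) := by
    have h := Complex.isPrimitiveRoot_exp _ hn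
    exact ⟨_, h.isUnit_unit hn⟩
  let T : AffC := ⟨1, 1⟩
  let U : AffC := ⟨ζ ^ (q + 1), 0⟩
  let W : AffC := ⟨(ζ ^ q)⁻¹, 0⟩
  let V : AffC := T * W * T⁻¹
  have hU : U ^ q = 1 := by
    simp only [U]
    rw [AffC.mk_zero_pow, ← pow_mul, mul_comm, hζ.pow_eq_one]; rfl
  have hW : W ^ (q + 1) = 1 := by
    simp only [W]
    rw [AffC.mk_zero_pow, inv_pow, ← pow_mul, hζ.pow_eq_one, inv_one]; rfl
  have hV : V ^ (q + 1) = 1 := by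
    simp only [V]
    rw [conj_pow, hW]; simp
  have hVa : V.a = (ζ ^ q)⁻¹ := by
    simp [V, T, W, AffC.mul_a, AffC.inv_a]
  have hVb : V.b = 1 - (((ζ ^ q)⁻¹ : ℂˣ) : ℂ) := by
    simp [V, T, W, AffC.mul_a, AffC.mul_b, AffC.inv_a, AffC.inv_b]; ring
  let F : Fin 4 → AffC := ![U, V, U, V]
  have hF : ∀ r ∈ GammaRels q, FreeGroup.lift F r = 1 := by
    intro r hr
    rcases hr with rfl | rfl | rfl | rfl <;> simp [F, hU, hV]
  let f : Gamma q →* AffC := PresentedGroup.toGroup hF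
  have f0 : f (PresentedGroup.of 0) = U := PresentedGroup.toGroup.of hF
  have f1 : f (PresentedGroup.of 1) = V := PresentedGroup.toGroup.of hF
  refine ⟨f, PresentedGroup.of 0, PresentedGroup.of 1, ?_,
    PresentedGroup.of 0 * PresentedGroup.of 1, ?_⟩
  · rw [f0, f1, Ne, AffC.commute_iff, hVa, hVb]
    have a1 : ζ ^ (q + 1) ≠ 1 := hζ.pow_ne_one_of_pos_of_lt (by omega) (by nlinarith)
    have a2 : ζ ^ q ≠ 1 := hζ.pow_ne_one_of_pos_of_lt (by omega) (by nlinarith)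
    have b1 : ((ζ ^ (q + 1) : ℂˣ) : ℂ) - 1 ≠ 0 := by
      rw [sub_ne_zero]; intro h; exact a1 (Units.ext h)
    have b2 : 1 - (((ζ ^ q)⁻¹ : ℂˣ) : ℂ) ≠ 0 := by
      rw [sub_ne_zero]; intro h
      exact a2 (inv_eq_one.mp (Units.ext h.symm))
    intro h
    have h' : (((ζ ^ (q + 1) : ℂˣ) : ℂ) - 1) * (1 - (((ζ ^ q)⁻¹ : ℂˣ) : ℂ)) = 0 := by
      rw [show U.b = 0 from rfl, mul_zero] at h
      exact h
    exact mul_ne_zero b1 b2 h'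
  · rw [map_mul, f0, f1, map_mul, AffC.lin_apply, AffC.lin_apply, hVa]
    have : U.a * (ζ ^ q)⁻¹ = ζ := by
      change ζ ^ (q + 1) * (ζ ^ q)⁻¹ = ζ
      rw [pow_succ', mul_inv_cancel_right]
    rw [this]; exact hζ

/-- For `2 ≤ p < q`, the groups `Γ_p` and `Γ_q` are not isomorphic. -/
theorem gamma_not_isomorphic (p q : ℕ) (hp : 2 ≤ p) (hpq : p < q) :
    ¬ Nonempty (Gamma p ≃* Gamma q) := by
  rintro ⟨e⟩
  obtain ⟨f, s, t, hst, z, hz⟩ := gamma_exists q (by omega)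
  have h := gamma_lin p (f.comp e.toMonoidHom) (e.symm s) (e.symm t) (by simpa using hst)
    (e.symm z)
  have h' : AffC.lin (f z) ^ (p * (p + 1)) = 1 := by simpa using h
  exact hz.pow_ne_one_of_pos_of_lt (by positivity) (by nlinarith) h'
end

section
/- For an integer p ≥ 2, the abelianization of the group Γ_p is infinite cyclic, i.e. isomorphic to ℤ. -/
/-- The images of the generators in `ℤ`. -/
def gammaGen (p : ℕ) : Fin 4 → Multiplicative ℤ :=
  ![Multiplicative.ofAdd ((p : ℤ) + 1), Multiplicative.ofAdd (-(p : ℤ)),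
    Multiplicative.ofAdd ((p : ℤ) + 1), Multiplicative.ofAdd (-(p : ℤ))]

lemma gammaGen_rels (p : ℕ) : ∀ r ∈ GammaRels p, FreeGroup.lift (gammaGen p) r = 1 := by
  intro r hr
  simp only [GammaRels, Set.mem_insert_iff, Set.mem_singleton_iff] at hr
  rcases hr with rfl | rfl | rfl | rfl <;>
  · apply Multiplicative.toAdd.injective
    simp [gammaGen]
    try ring

lemma comm_aux {A : Type*} [CommGroup A] (p : ℕ) (a b : A) (h : a ^ p * b ^ (p + 1) = 1) :
    (a * b) ^ ((p : ℤ) + 1) = a ∧ (a * b) ^ (-(p : ℤ)) = b := by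
  have h1 : (a * b) ^ (p + 1) = a := by
    calc (a * b) ^ (p + 1) = a * (a ^ p * b ^ (p + 1)) := by
          rw [mul_pow, pow_succ a, mul_comm (a ^ p) a, mul_assoc]
      _ = a := by rw [h, mul_one]
  refine ⟨by exact_mod_cast h1, ?_⟩
  rw [zpow_neg, zpow_natCast, inv_eq_iff_mul_eq_one]
  rw [← h, mul_pow, pow_succ b, mul_assoc]

/-- For `p ≥ 2`, the abelianization of `Γ_p` is infinite cyclic. -/
theorem gamma_abelianization_isomorphic_int (p : ℕ) (hp : 2 ≤ p) :
    Nonempty (Abelianization (Gamma p) ≃* Multiplicative ℤ) := by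
  let q : FreeGroup (Fin 4) →* Abelianization (Gamma p) :=
    Abelianization.of.comp (PresentedGroup.mk (GammaRels p))
  have hq : ∀ r ∈ GammaRels p, q r = 1 := by
    intro r hr
    change Abelianization.of (PresentedGroup.mk (GammaRels p) r) = 1
    rw [PresentedGroup.one_of_mem hr, map_one]
  have h1 := hq _ (Or.inl rfl)
  have h2 := hq _ (Or.inr (Or.inl rfl))
  have h3 := hq _ (Or.inr (Or.inr (Or.inl rfl)))
  simp only [map_mul, map_pow, map_inv] at h1 h2 h3
  rw [mul_inv_eq_one] at h3
  obtain ⟨a0, a1⟩ := comm_aux p _ _ h1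
  obtain ⟨a2, a3⟩ := comm_aux p _ _ h2
  rw [← h3] at a2 a3
  let f : Abelianization (Gamma p) →* Multiplicative ℤ :=
    Abelianization.lift (PresentedGroup.toGroup (gammaGen_rels p))
  have hf : ∀ i, f (q (FreeGroup.of i)) = gammaGen p i := by
    intro i
    change f (Abelianization.of (PresentedGroup.of i)) = _
    simp only [f, Abelianization.lift_apply_of, PresentedGroup.toGroup.of]
  let g : Multiplicative ℤ →* Abelianization (Gamma p) :=
    zpowersHom _ (q (FreeGroup.of 0) * q (FreeGroup.of 1))
  refine ⟨MonoidHom.toMulEquiv f g ?_ ?_⟩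
  · apply Abelianization.hom_ext
    apply PresentedGroup.ext
    intro i
    change g (f (q (FreeGroup.of i))) = q (FreeGroup.of i)
    rw [hf]
    fin_cases i
    · exact a0
    · exact a1
    · exact a2
    · exact a3
  · apply MonoidHom.ext_mint
    simp only [MonoidHom.comp_apply, g, zpowersHom_apply, toAdd_ofAdd, zpow_one, map_mul, hf,
      MonoidHom.id_apply]
    apply Multiplicative.toAdd.injective
    simp [gammaGen]
end

section
/- For an integer p ≥ 2, let t = xy, a = (xy)^p v, and b = (xy)^p y in Γ_p. Then the commutator subgroup [Γ_p, Γ_p] equals the subgroup of Γ_p generated by the set of all elements t^k a t^(−k) and t^k b t^(−k) for k ∈ ℤ. -/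
theorem gamma_aux_abelian {A : Type*} [CommGroup A] (p : ℕ) (u v t : A)
    (h1 : u ^ p * v ^ (p + 1) = 1) (h2 : u * v = t) : t ^ p * v = 1 := by
  rw [← h2, mul_pow, mul_assoc, ← pow_succ, h1]

/-- Abstract form: a group generated by `u, v, x, y` with the given relations. -/
theorem gamma_aux {G : Type*} [Group G] (p : ℕ) (u v x y : G)
    (h1 : u ^ p * v ^ (p + 1) = 1) (h2 : x ^ p * y ^ (p + 1) = 1) (h3 : u * v = x * y)
    (hgen : ∀ K : Subgroup G, u ∈ K → v ∈ K → x ∈ K → y ∈ K → ∀ g, g ∈ K) :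
    commutator G = Subgroup.closure {g : G | ∃ k : ℤ,
        g = ((x * y) ^ k * ((x * y) ^ p * v) * (x * y) ^ (-k)) ∨
        g = ((x * y) ^ k * ((x * y) ^ p * y) * (x * y) ^ (-k))} := by
  set S : Set G := {g : G | ∃ k : ℤ,
        g = ((x * y) ^ k * ((x * y) ^ p * v) * (x * y) ^ (-k)) ∨
        g = ((x * y) ^ k * ((x * y) ^ p * y) * (x * y) ^ (-k))} with hS
  have ha : (x * y) ^ p * v ∈ Subgroup.closure S :=
    Subgroup.subset_closure ⟨0, Or.inl (by simp)⟩
  have hb : (x * y) ^ p * y ∈ Subgroup.closure S :=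
    Subgroup.subset_closure ⟨0, Or.inr (by simp)⟩
  -- membership of the generators in any subgroup containing `t` and the closure
  have htop : ∀ K : Subgroup G, x * y ∈ K → Subgroup.closure S ≤ K → ∀ g, g ∈ K := by
    intro K ht hK
    have hv : v ∈ K := (Subgroup.mul_mem_cancel_left K (K.pow_mem ht p)).1 (hK ha)
    have hy : y ∈ K := (Subgroup.mul_mem_cancel_left K (K.pow_mem ht p)).1 (hK hb)
    have hx : x ∈ K := (Subgroup.mul_mem_cancel_right K hy).1 ht
    have hu : u ∈ K := (Subgroup.mul_mem_cancel_right K hv).1 (h3 ▸ ht)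
    exact hgen K hu hv hx hy
  have hconj : ∀ m : ℤ, ∀ g ∈ Subgroup.closure S,
      (x * y) ^ m * g * ((x * y) ^ m)⁻¹ ∈ Subgroup.closure S := by
    intro m g hg
    induction hg using Subgroup.closure_induction with
    | mem g hg =>
      obtain ⟨k, hk | hk⟩ := hg
      · refine Subgroup.subset_closure ⟨m + k, Or.inl ?_⟩
        rw [hk, neg_add_rev, zpow_add, zpow_add, zpow_neg _ m]; simp only [mul_assoc]
      · refine Subgroup.subset_closure ⟨m + k, Or.inr ?_⟩
        rw [hk, neg_add_rev, zpow_add, zpow_add, zpow_neg _ m]; simp only [mul_assoc]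
    | one => simp
    | mul a b _ _ iha ihb =>
      have := mul_mem iha ihb
      rwa [conj_mul] at this
    | inv a _ iha =>
      have := inv_mem iha
      rwa [conj_inv] at this
  have hN : (Subgroup.closure S).Normal := by
    rw [← Subgroup.normalizer_eq_top_iff, Subgroup.eq_top_iff']
    refine htop _ ?_ Subgroup.le_normalizer
    rw [Subgroup.mem_normalizer_iff]
    intro g
    refine ⟨fun hg => by simpa using hconj 1 g hg, fun hg => ?_⟩
    have := hconj (-1) _ hg
    rw [zpow_neg_one, inv_inv] at this
    convert this using 1
    group
  apply le_antisymm
  · have hz : ∀ g : G, (g : G ⧸ Subgroup.closure S) ∈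
        Subgroup.zpowers ((x * y : G) : G ⧸ Subgroup.closure S) := by
      refine htop ((Subgroup.zpowers ((x * y : G) : G ⧸ Subgroup.closure S)).comap
        (QuotientGroup.mk' (Subgroup.closure S))) (Subgroup.mem_zpowers _) ?_
      intro g hg
      rw [Subgroup.mem_comap, QuotientGroup.mk'_apply, (QuotientGroup.eq_one_iff g).2 hg]
      exact one_mem _
    rw [commutator_def, Subgroup.commutator_le]
    intro g _ h _
    obtain ⟨m, hm⟩ := Subgroup.mem_zpowers_iff.1 (hz g)
    obtain ⟨n, hn⟩ := Subgroup.mem_zpowers_iff.1 (hz h)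
    rw [← QuotientGroup.eq_one_iff, ← QuotientGroup.mk'_apply, map_commutatorElement,
      QuotientGroup.mk'_apply, QuotientGroup.mk'_apply, ← hm, ← hn, commutatorElement_eq_one_iff_commute]
    exact Commute.zpow_zpow_self _ m n
  · rw [Subgroup.closure_le]
    have ea : (x * y) ^ p * v ∈ commutator G := by
      rw [← Abelianization.ker_of, MonoidHom.mem_ker, map_mul, map_pow]
      refine gamma_aux_abelian p (Abelianization.of u) _ _ ?_ ?_
      · simpa using congrArg Abelianization.of h1
      · rw [← map_mul, h3]
    have eb : (x * y) ^ p * y ∈ commutator G := by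
      rw [← Abelianization.ker_of, MonoidHom.mem_ker, map_mul, map_pow]
      refine gamma_aux_abelian p (Abelianization.of x) _ _ ?_ ?_
      · simpa using congrArg Abelianization.of h2
      · rw [← map_mul]
    have hn : (commutator G).Normal := inferInstance
    rintro g ⟨k, rfl | rfl⟩
    · rw [zpow_neg]; exact hn.conj_mem _ ea _
    · rw [zpow_neg]; exact hn.conj_mem _ eb _

/-- For `p ≥ 2`, with `t = xy`, `a = (xy)^p v` and `b = (xy)^p y` in `Γ_p`, the
commutator subgroup `[Γ_p, Γ_p]` is the subgroup generated by the elements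
`t^k a t^(−k)` and `t^k b t^(−k)` for `k ∈ ℤ`. -/
theorem gamma_commutator_eq_closure (p : ℕ) (hp : 2 ≤ p) :
    commutator (Gamma p) =
      Subgroup.closure {g : Gamma p | ∃ k : ℤ,
        g = ((PresentedGroup.of 2 * PresentedGroup.of 3 : Gamma p) ^ k *
              ((PresentedGroup.of 2 * PresentedGroup.of 3 : Gamma p) ^ p *
                PresentedGroup.of 1) *
              (PresentedGroup.of 2 * PresentedGroup.of 3 : Gamma p) ^ (-k)) ∨
        g = ((PresentedGroup.of 2 * PresentedGroup.of 3 : Gamma p) ^ k *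
              ((PresentedGroup.of 2 * PresentedGroup.of 3 : Gamma p) ^ p *
                PresentedGroup.of 3) *
              (PresentedGroup.of 2 * PresentedGroup.of 3 : Gamma p) ^ (-k))} := by
  have hrel : ∀ r ∈ GammaRels p, PresentedGroup.mk (GammaRels p) r = 1 := fun r hr =>
    PresentedGroup.one_of_mem hr
  refine gamma_aux p (PresentedGroup.of 0 : Gamma p) (PresentedGroup.of 1)
    (PresentedGroup.of 2) (PresentedGroup.of 3) ?_ ?_ ?_ ?_
  · exact hrel (FreeGroup.of 0 ^ p * FreeGroup.of 1 ^ (p + 1)) (by simp [GammaRels])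
  · exact hrel (FreeGroup.of 2 ^ p * FreeGroup.of 3 ^ (p + 1)) (by simp [GammaRels])
  · rw [← mul_inv_eq_one]
    exact hrel ((FreeGroup.of 0 * FreeGroup.of 1) * (FreeGroup.of 2 * FreeGroup.of 3)⁻¹)
      (by simp [GammaRels])
  · intro K h0 h1 h2 h3 g
    have hle : Subgroup.closure (Set.range PresentedGroup.of) ≤ K := by
      rw [Subgroup.closure_le]
      rintro _ ⟨i, rfl⟩
      fin_cases i <;> assumption
    rw [PresentedGroup.closure_range_of] at hle
    exact hle (Subgroup.mem_top g)
end

section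
/- For every integer p ≥ 1, the identity 𝔭_p(t) · (t^(p+1) − 1) · (t^p − 1) = (t^(p(p+1)) − 1) · (t − 1) holds in the polynomial ring ℤ[t]. -/
open Polynomial

/-- The polynomial `𝔭_p(t) = Σ_{k=0}^{p} t^(p²−kp) − Σ_{k=0}^{p−1} t^(k(p+1)+1)`
with integer coefficients. -/
noncomputable def frakP (p : ℕ) : Polynomial ℤ :=
  ∑ k ∈ Finset.range (p + 1), X ^ (p ^ 2 - k * p) -
    ∑ k ∈ Finset.range p, X ^ (k * (p + 1) + 1)

/-- For `p ≥ 1`, `𝔭_p(t)(t^(p+1) − 1)(t^p − 1) = (t^(p(p+1)) − 1)(t − 1)` in `ℤ[t]`. -/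
theorem frakP_mul_eq (p : ℕ) (hp : 1 ≤ p) :
    frakP p * (X ^ (p + 1) - 1) * (X ^ p - 1) =
      (X ^ (p * (p + 1)) - 1) * (X - 1) := by
  have h1 : (∑ k ∈ Finset.range (p + 1), (X : ℤ[X]) ^ (p ^ 2 - k * p)) * (X ^ p - 1)
      = X ^ (p * (p + 1)) - 1 := by
    rw [pow_mul, ← geom_sum_mul (X ^ p : ℤ[X]) (p + 1),
      ← Finset.sum_range_reflect (fun i => (X ^ p : ℤ[X]) ^ i)]
    congr 1
    refine Finset.sum_congr rfl fun k hk => ?_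
    have hk' : k ≤ p := Nat.lt_succ_iff.mp (Finset.mem_range.mp hk)
    simp only [← pow_mul]
    congr 1
    obtain ⟨d, rfl⟩ := Nat.exists_eq_add_of_le hk'
    have e : k + d + 1 - 1 - k = d := by omega
    rw [e]
    have e3 : (k + d) ^ 2 = (k + d) * d + k * (k + d) := by ring
    rw [e3, Nat.add_sub_cancel]
  have h2 : (∑ k ∈ Finset.range p, (X : ℤ[X]) ^ (k * (p + 1) + 1)) * (X ^ (p + 1) - 1)
      = X * (X ^ (p * (p + 1)) - 1) := by
    rw [mul_comm p (p + 1), pow_mul, ← geom_sum_mul (X ^ (p + 1) : ℤ[X]) p, ← mul_assoc, Finset.mul_sum]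
    congr 1
    refine Finset.sum_congr rfl fun k _ => ?_
    rw [← pow_mul, pow_succ, mul_comm k, mul_comm]
  unfold frakP
  linear_combination (X ^ (p + 1) - 1) * h1 - (X ^ p - 1) * h2
end

section
/- For an integer p ≥ 2, the complex number ζ = exp(2πi/(p(p+1))) is a zero of 𝔭_p, i.e. 𝔭_p(ζ) = 0 in ℂ. -/
open Polynomial

/-- For `p ≥ 2`, the complex number `ζ = exp(2πi/(p(p+1)))` is a zero of `𝔭_p`. -/
theorem frakP_root_exp (p : ℕ) (hp : 2 ≤ p) :
    Polynomial.aeval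
        (Complex.exp (2 * Real.pi * Complex.I / ((p : ℂ) * ((p : ℂ) + 1))))
        (frakP p) = 0 := by
  have h0 : p * (p + 1) ≠ 0 := by positivity
  have hζ := Complex.isPrimitiveRoot_exp (p * (p + 1)) h0
  push_cast at hζ
  generalize Complex.exp (2 * Real.pi * Complex.I / ((p : ℂ) * ((p : ℂ) + 1))) = z at hζ ⊢
  have h1 : IsPrimitiveRoot (z ^ p) (p + 1) := hζ.pow (by positivity) rfl
  have h2 : IsPrimitiveRoot (z ^ (p + 1)) p := hζ.pow (by positivity) (mul_comm _ _)
  have s1 := h1.geom_sum_eq_zero (by omega)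
  have s2 := h2.geom_sum_eq_zero (by omega)
  have e1 : ∑ k ∈ Finset.range (p + 1), z ^ (p ^ 2 - k * p) = 0 := by
    rw [← s1, ← Finset.sum_range_reflect]
    refine Finset.sum_congr rfl fun k hk => ?_
    have hk' : k ≤ p := by simpa [Nat.lt_succ_iff] using hk
    rw [← pow_mul]
    congr 1
    obtain ⟨d, rfl⟩ := Nat.exists_eq_add_of_le hk'
    have : k + d + 1 - 1 - k = d := by omega
    rw [this]
    apply Nat.sub_eq_of_eq_add
    ring
  have e2 : ∑ k ∈ Finset.range p, z ^ (k * (p + 1) + 1) = 0 := by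
    rw [← zero_mul z, ← s2, Finset.sum_mul]
    refine Finset.sum_congr rfl fun k _ => ?_
    rw [← pow_mul, pow_succ, mul_comm k]
  simp only [frakP, map_sub, map_sum, map_pow, aeval_X]
  rw [e1, e2, sub_zero]
end

section
/- For integers p and k with 2 ≤ p < k, the complex number ω = exp(2πi/(k(k+1))) satisfies 𝔭_p(ω) ≠ 0; in particular ω is not a zero of 𝔭_p(t)². -/
open Polynomial

theorem frakP_key (p : ℕ) (w : ℂ) :
    Polynomial.aeval w (frakP p) * ((w ^ p - 1) * (w ^ (p + 1) - 1)) =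
      (w ^ (p * (p + 1)) - 1) * (w - 1) := by
  have h1 : Polynomial.aeval w (frakP p) =
      ∑ j ∈ Finset.range (p + 1), (w ^ p) ^ j -
        w * ∑ j ∈ Finset.range p, (w ^ (p + 1)) ^ j := by
    simp only [frakP, map_sub, map_sum, map_pow, aeval_X]
    congr 1
    · rw [← Finset.sum_range_reflect]
      apply Finset.sum_congr rfl
      intro j hj
      have hj' : j ≤ p := by
        have := Finset.mem_range.mp hj
        omega
      rw [← pow_mul]
      congr 1
      obtain ⟨d, rfl⟩ := Nat.exists_eq_add_of_le hj'
      have h2 : j + d + 1 - 1 - j = d := by omega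
      rw [h2]
      apply Nat.sub_eq_of_eq_add
      ring
    · rw [Finset.mul_sum]
      apply Finset.sum_congr rfl
      intro j _
      rw [← pow_mul]
      ring
  have g1 := geom_sum_mul (w ^ p) (p + 1)
  have g2 := geom_sum_mul (w ^ (p + 1)) p
  rw [← pow_mul] at g1 g2
  rw [Nat.mul_comm (p + 1) p] at g2
  rw [h1]
  linear_combination (w ^ (p + 1) - 1) * g1 - w * (w ^ p - 1) * g2

/-- For `2 ≤ p < k`, the complex number `ω = exp(2πi/(k(k+1)))` is not a zero of
`𝔭_p`; in particular it is not a zero of `𝔭_p(t)²`. -/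
theorem frakP_not_root_exp (p k : ℕ) (hp : 2 ≤ p) (hpk : p < k) :
    Polynomial.aeval
        (Complex.exp (2 * Real.pi * Complex.I / ((k : ℂ) * ((k : ℂ) + 1))))
        (frakP p) ≠ 0 ∧
    Polynomial.aeval
        (Complex.exp (2 * Real.pi * Complex.I / ((k : ℂ) * ((k : ℂ) + 1))))
        (frakP p ^ 2) ≠ 0 := by
  have hroot : Polynomial.aeval
        (Complex.exp (2 * Real.pi * Complex.I / ((k : ℂ) * ((k : ℂ) + 1))))
        (frakP p) ≠ 0 := by
    have hn : k * (k + 1) ≠ 0 := by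
      have : 0 < k := by omega
      positivity
    have hprim := Complex.isPrimitiveRoot_exp (k * (k + 1)) hn
    push_cast at hprim
    intro h0
    have key := frakP_key p
      (Complex.exp (2 * Real.pi * Complex.I / ((k : ℂ) * ((k : ℂ) + 1))))
    rw [h0, zero_mul] at key
    have hlt : p * (p + 1) < k * (k + 1) := by nlinarith
    rcases mul_eq_zero.mp key.symm with h | h
    · exact hprim.pow_ne_one_of_pos_of_lt (by positivity) hlt (sub_eq_zero.mp h)
    · exact hprim.ne_one (by nlinarith) (sub_eq_zero.mp h)
  refine ⟨hroot, ?_⟩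
  rw [map_pow]
  exact pow_ne_zero 2 hroot
end

section
/- For an integer p ≥ 2, the group Γ_p is not abelian; in particular Γ_p is not isomorphic to the infinite cyclic group ℤ. -/
theorem exists_root_unit (n : ℕ) (hn : 2 ≤ n) :
    ∃ z : ℂˣ, z ^ n = 1 ∧ (z : ℂ) ≠ 1 := by
  have h := Complex.isPrimitiveRoot_exp n (by omega)
  obtain ⟨z, hz⟩ := h.isUnit (by omega)
  refine ⟨z, ?_, ?_⟩
  · ext
    rw [Units.val_pow_eq_pow_val, hz, h.pow_eq_one, Units.val_one]
  · rw [hz]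
    exact h.ne_one (by omega)

theorem exists_noncomm_pair (p : ℕ) (hp : 2 ≤ p) :
    ∃ a b : Equiv.Perm ℂ, a ^ p = 1 ∧ b ^ (p + 1) = 1 ∧ a * b ≠ b * a := by
  obtain ⟨z, hz, hz1⟩ := exists_root_unit p hp
  obtain ⟨w, hw, hw1⟩ := exists_root_unit (p + 1) (by omega)
  let T : Equiv.Perm ℂ := Equiv.addRight (1 : ℂ)
  let m := MulAction.toPermHom ℂˣ ℂ
  refine ⟨m z, T * m w * T⁻¹, ?_, ?_, ?_⟩
  · rw [← map_pow, hz, map_one]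
  · rw [conj_pow, ← map_pow, hw, map_one, mul_one, mul_inv_cancel]
  · intro h
    have h0 := congrArg (fun f : Equiv.Perm ℂ => f 0) h
    have hT : T⁻¹ (0 : ℂ) = -1 := by
      rw [Equiv.Perm.inv_eq_iff_eq]; simp [T]
    have hm : ∀ (c : ℂˣ) (t : ℂ), m c t = c * t := fun c t => rfl
    have hTa : ∀ t : ℂ, T t = t + 1 := fun t => rfl
    simp only [Equiv.Perm.mul_apply, hm, mul_zero, hT, hTa] at h0
    have : ((z : ℂ) - 1) * ((w : ℂ) - 1) = 0 := by linear_combination -h0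
    rcases mul_eq_zero.mp this with h | h
    · exact hz1 (sub_eq_zero.mp h)
    · exact hw1 (sub_eq_zero.mp h)

/-- For `p ≥ 2`, the group `Γ_p` is not abelian; in particular it is not
isomorphic to the infinite cyclic group `ℤ`. -/
theorem gamma_not_abelian (p : ℕ) (hp : 2 ≤ p) :
    (¬ ∀ a b : Gamma p, a * b = b * a) ∧
      ¬ Nonempty (Gamma p ≃* Multiplicative ℤ) := by
  have key : ¬ ∀ a b : Gamma p, a * b = b * a := by
    intro hc
    obtain ⟨a, b, ha, hb, hab⟩ := exists_noncomm_pair p hp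
    let f : Fin 4 → Equiv.Perm ℂ := ![a, b, a, b]
    have hf : ∀ r ∈ GammaRels p, FreeGroup.lift f r = 1 := by
      intro r hr
      simp only [GammaRels, Set.mem_insert_iff, Set.mem_singleton_iff] at hr
      rcases hr with rfl | rfl | rfl | rfl <;> simp [f, ha, hb]
    have h := congrArg (PresentedGroup.toGroup hf)
      (hc (PresentedGroup.of 0) (PresentedGroup.of 1))
    simp only [map_mul, PresentedGroup.toGroup.of] at h
    exact hab h
  refine ⟨key, ?_⟩
  rintro ⟨e⟩
  apply key
  intro a b
  apply e.injective
  rw [map_mul, map_mul, mul_comm]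
end

section
/- For an integer p ≥ 2, set y = a₁a₂⋯a_p and x = a₁⁻¹ y⁻¹ in the group W_p. Then x^p y^(p+1) = 1 holds in W_p, and the two elements x and y generate W_p. -/
/-- In the free group on generators `z` (indexed by `none`) and `a₁, …, a_p`
(with `aᵢ` indexed by `some (i-1)`), the word `a₁a₂⋯a_p`. -/
def wA (p : ℕ) : FreeGroup (Option (Fin p)) :=
  (List.ofFn fun k : Fin p => FreeGroup.of (some k)).prod

/-- The Wirtinger relators of the `(p, p+1)` torus knot group:
`z(a₁⋯a_p a₁)⁻¹`, `z a₁ z⁻¹ a_p⁻¹`, and `z a_{k+1} z⁻¹ a_k⁻¹` for `1 ≤ k ≤ p−1`.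
Here `z` is indexed by `none` and `aᵢ` by `some (i-1)`. -/
def WirtingerRels (p : ℕ) (hp : 2 ≤ p) : Set (FreeGroup (Option (Fin p))) :=
  let z : FreeGroup (Option (Fin p)) := FreeGroup.of none
  let a : Fin p → FreeGroup (Option (Fin p)) := fun k => FreeGroup.of (some k)
  {z * (wA p * a ⟨0, by omega⟩)⁻¹,
   z * a ⟨0, by omega⟩ * z⁻¹ * (a ⟨p - 1, by omega⟩)⁻¹} ∪
  {r | ∃ k : Fin (p - 1),
    r = z * a ⟨(k : ℕ) + 1, by have := k.2; omega⟩ * z⁻¹ *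
          (a ⟨(k : ℕ), by have := k.2; omega⟩)⁻¹}

/-- The group `W_p` with Wirtinger presentation
`⟨z, a₁, …, a_p | z = a₁⋯a_p a₁, z a₁ z⁻¹ = a_p, z a_{k+1} z⁻¹ = a_k (1 ≤ k ≤ p−1)⟩`. -/
abbrev WirtingerGroup (p : ℕ) (hp : 2 ≤ p) : Type := PresentedGroup (WirtingerRels p hp)

theorem conj_prod_aux {G : Type*} [Group G] (z b : G) (n : ℕ) :
    (List.ofFn fun k : Fin n => (z ^ (k : ℕ))⁻¹ * b * z ^ (k : ℕ)).prod
      = (b * z⁻¹) ^ n * z ^ n := by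
  induction n with
  | zero => simp
  | succ n ih =>
    rw [List.ofFn_succ', List.concat_eq_append, List.prod_append]
    simp only [Fin.val_castSucc, Fin.val_last, List.prod_singleton]
    rw [ih, pow_succ (b * z⁻¹), pow_succ' z]
    group

theorem wirtinger_abs {G : Type*} [Group G] (p : ℕ) (hp : 2 ≤ p) (z : G) (a : Fin p → G) (y : G)
    (hy : y = (List.ofFn a).prod) (hz : z = y * a ⟨0, by omega⟩)
    (hk : ∀ k (h : k + 1 < p), z * a ⟨k + 1, h⟩ * z⁻¹ = a ⟨k, by omega⟩) :
    ((a ⟨0, by omega⟩)⁻¹ * y⁻¹) ^ p * y ^ (p + 1) = 1 ∧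
    ∀ H : Subgroup G, (a ⟨0, by omega⟩)⁻¹ * y⁻¹ ∈ H → y ∈ H → z ∈ H ∧ ∀ k, a k ∈ H := by
  have ha : ∀ k (h : k < p), a ⟨k, h⟩ = (z ^ k)⁻¹ * a ⟨0, by omega⟩ * z ^ k := by
    intro k
    induction k with
    | zero => intro h; simp
    | succ k ih =>
      intro h
      have h1 := hk k h
      rw [ih (by omega)] at h1
      have h2 : a ⟨k + 1, h⟩ = z⁻¹ * (z * a ⟨k + 1, h⟩ * z⁻¹) * z := by group
      rw [h2, h1, pow_succ]
      group
  have hx : (a ⟨0, by omega⟩)⁻¹ * y⁻¹ = z⁻¹ := by rw [hz]; group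
  have hyz : y = (a ⟨0, by omega⟩ * z⁻¹) ^ p * z ^ p := by
    rw [← conj_prod_aux]
    refine hy.trans ?_
    congr 2
    funext k
    exact ha k k.2
  have h0 : a ⟨0, by omega⟩ = y⁻¹ * z := by rw [hz]; group
  refine ⟨?_, ?_⟩
  · rw [hx]
    have h3 : a ⟨0, by omega⟩ * z⁻¹ = y⁻¹ := by rw [h0]; group
    rw [h3, inv_pow] at hyz
    have h4 : y ^ (p + 1) = z ^ p := by
      rw [pow_succ]
      exact (eq_inv_mul_iff_mul_eq.mp hyz)
    rw [h4, inv_pow, inv_mul_cancel]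
  · intro H h1 h2
    rw [hx] at h1
    have h3 : z ∈ H := by simpa using h1
    refine ⟨h3, fun k => ?_⟩
    have h5 : a k = _ := ha k k.2
    rw [h5, h0]
    have h4 := H.pow_mem h3 (k : ℕ)
    exact H.mul_mem (H.mul_mem (H.inv_mem h4) (H.mul_mem (H.inv_mem h2) h3)) h4

/-- For `p ≥ 2`, setting `y = a₁a₂⋯a_p` and `x = a₁⁻¹y⁻¹` in `W_p`, one has
`x^p y^(p+1) = 1`, and `x` and `y` generate `W_p`. -/
theorem wirtinger_xy (p : ℕ) (hp : 2 ≤ p) :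
    ((PresentedGroup.of (some ⟨0, by omega⟩) : WirtingerGroup p hp)⁻¹ *
          (PresentedGroup.mk (WirtingerRels p hp) (wA p))⁻¹) ^ p *
        (PresentedGroup.mk (WirtingerRels p hp) (wA p)) ^ (p + 1) = 1 ∧
    Subgroup.closure
        {(PresentedGroup.of (some ⟨0, by omega⟩) : WirtingerGroup p hp)⁻¹ *
            (PresentedGroup.mk (WirtingerRels p hp) (wA p))⁻¹,
          PresentedGroup.mk (WirtingerRels p hp) (wA p)} = ⊤ := by
  have key := wirtinger_abs p hp (PresentedGroup.of none : WirtingerGroup p hp)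
    (fun k => PresentedGroup.of (some k)) (PresentedGroup.mk (WirtingerRels p hp) (wA p))
    (by
      rw [wA, map_list_prod, List.map_ofFn]
      rfl)
    (by
      have h : PresentedGroup.mk (WirtingerRels p hp) _ = 1 :=
        PresentedGroup.one_of_mem (Or.inl (Or.inl rfl))
      rw [map_mul, map_inv, mul_inv_eq_one, map_mul] at h
      exact h)
    (by
      intro k hk
      have h : PresentedGroup.mk (WirtingerRels p hp) _ = 1 :=
        PresentedGroup.one_of_mem (Or.inr ⟨⟨k, by omega⟩, rfl⟩)
      rw [map_mul, map_inv, mul_inv_eq_one, map_mul, map_mul, map_inv] at h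
      exact h)
  refine ⟨key.1, ?_⟩
  obtain ⟨h1, h2⟩ := key.2 (Subgroup.closure
    {(PresentedGroup.of (some ⟨0, by omega⟩) : WirtingerGroup p hp)⁻¹ *
            (PresentedGroup.mk (WirtingerRels p hp) (wA p))⁻¹,
          PresentedGroup.mk (WirtingerRels p hp) (wA p)})
    (Subgroup.subset_closure (Or.inl rfl)) (Subgroup.subset_closure (Or.inr rfl))
  rw [eq_top_iff, ← PresentedGroup.closure_range_of, Subgroup.closure_le]
  rintro _ ⟨k, rfl⟩
  cases k with
  | none => exact h1
  | some k => exact h2 k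
end
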